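/- Let C be a quasiminimal pregeometry class and H, H' ∈ C be of the same uncountable cardinality. Then H ≡_{ω₁,ω} H'; equivalently, the empty map is a partial σ-embedding between H and H'. -/

import Mathlib

open FirstOrder FirstOrder.Language Set Cardinal



universe u u' v w

namespace QM

variable {L : FirstOrder.Language.{v, w}}

/-- Formulas of `L_{ω₁,ω}`: built from atomic formulas by negation, countable
conjunction (indexed by `ℕ`), and universal quantification; `α` is the type of free
variables and `n` counts the de Bruijn bound variables. Countable disjunctions and
the existential quantifier are definable via negation. -/
inductive InfFormula (L : FirstOrder.Language.{v, w}) (α : Type u) : ℕ → Type (max u v w)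
  | falsum {n : ℕ} : InfFormula L α n
  | equal {n : ℕ} (t₁ t₂ : L.Term (α ⊕ (Fin n))) : InfFormula L α n
  | rel {n l : ℕ} (R : L.Relations l) (ts : Fin l → L.Term (α ⊕ (Fin n))) : InfFormula L α n
  | not {n : ℕ} (φ : InfFormula L α n) : InfFormula L α n
  | iInf {n : ℕ} (φ : ℕ → InfFormula L α n) : InfFormula L α n
  | all {n : ℕ} (φ : InfFormula L α (n + 1)) : InfFormula L α n

/-- Satisfaction of an `L_{ω₁,ω}`-formula in an `L`-structure `M`, given an
assignment `v` of the free variables and `xs` of the bound variables. -/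
def InfFormula.Realize {M : Type u'} [L.Structure M] {α : Type u} :
    ∀ {n : ℕ}, InfFormula L α n → (α → M) → (Fin n → M) → Prop
  | _, .falsum, _, _ => False
  | _, .equal t₁ t₂, v, xs => t₁.realize (Sum.elim v xs) = t₂.realize (Sum.elim v xs)
  | _, .rel R ts, v, xs => Structure.RelMap R (fun i => (ts i).realize (Sum.elim v xs))
  | _, .not φ, v, xs => ¬ φ.Realize v xs
  | _, .iInf φ, v, xs => ∀ i : ℕ, (φ i).Realize v xs
  | _, .all φ, v, xs => ∀ x : M, φ.Realize v (Fin.snoc xs x)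

/-- An `L_{ω₁,ω}`-sentence. -/
abbrev InfSentence (L : FirstOrder.Language.{v, w}) := InfFormula L PEmpty 0

/-- Satisfaction of an `L_{ω₁,ω}`-sentence. -/
def InfSentence.RealizeS (M : Type u') [L.Structure M] (φ : InfSentence L) : Prop :=
  InfFormula.Realize (M := M) φ PEmpty.elim (fun i => i.elim0)

/-- Satisfaction of an `L_{ω₁,ω}`-formula with parameters from the set `A`
and `m` free variables `v̄`, at the tuple `v`. -/
def InfFormula.RealizeP {M : Type u'} [L.Structure M] {A : Set M} {m : ℕ}
    (φ : InfFormula L (↥A ⊕ Fin m) 0) (v : Fin m → M) : Prop :=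
  φ.Realize (Sum.elim Subtype.val v) (fun i => i.elim0)

/-- The domain of a partial map, viewed as a graph (set of pairs). -/
def pdom {H : Type*} {H' : Type*} (p : Set (H × H')) : Set H := Prod.fst '' p

/-- The image of a partial map, viewed as a graph (set of pairs). -/
def pimg {H : Type*} {H' : Type*} (p : Set (H × H')) : Set H' := Prod.snd '' p

/-- The image of a set `X` under a partial map given as a graph. -/
def pimage {H : Type*} {H' : Type*} (p : Set (H × H')) (X : Set H) : Set H' :=
  {b | ∃ a ∈ X, (a, b) ∈ p}

/-- A partial map (given as its graph `p`) is a partial embedding if it preserves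
quantifier-free first-order formulas. (This forces `p` to be the graph of an
injective partial function.) -/
def IsPartialEmbedding {H : Type u} {H' : Type u} [L.Structure H] [L.Structure H']
    (p : Set (H × H')) : Prop :=
  ∀ (n : ℕ) (φ : L.Formula (Fin n)), BoundedFormula.IsQF φ →
    ∀ (a : Fin n → H) (b : Fin n → H'), (∀ i, (a i, b i) ∈ p) →
      (φ.Realize a ↔ φ.Realize b)

/-- A partial map is a σ-embedding if it is a partial embedding and preserves all
`L_{ω₁,ω}`-formulas with (possibly infinitely many) parameters from its domain;
equivalently `⟨M, m⟩_{m ∈ dom p} ≡_{ω₁,ω} ⟨N, p(m)⟩_{m ∈ dom p}`. -/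
def IsSigmaEmbedding {H : Type u} {H' : Type u} [L.Structure H] [L.Structure H']
    (p : Set (H × H')) : Prop :=
  IsPartialEmbedding (L := L) p ∧
    ∀ (φ : InfFormula L (↥(pdom p)) 0) (b : ↥(pdom p) → H'),
      (∀ x : ↥(pdom p), ((x : H), b x) ∈ p) →
        (φ.Realize Subtype.val (fun i => i.elim0) ↔ φ.Realize b (fun i => i.elim0))

/-- A pregeometry (combinatorial geometry) on a set. -/
structure IsPregeometry {α : Type*} (cl : Set α → Set α) : Prop where
  subset_cl : ∀ X, X ⊆ cl X
  mono : ∀ ⦃X Y : Set α⦄, X ⊆ Y → cl X ⊆ cl Y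
  idem : ∀ X, cl (cl X) = cl X
  finChar : ∀ (X : Set α) (y : α), y ∈ cl X → ∃ F : Finset α, ↑F ⊆ X ∧ y ∈ cl ↑F
  exchange : ∀ (X : Set α) (a b : α), a ∈ cl (X ∪ {b}) → a ∉ cl X → b ∈ cl (X ∪ {a})

/-- A pair `⟨H, cl_H⟩` of an `L`-structure and a closure operator on it. -/
structure QMObj (L : FirstOrder.Language.{v, w}) where
  carrier : Type u
  [str : L.Structure carrier]
  cl : Set carrier → Set carrier

attribute [instance] QMObj.str

/-- `G` is countable and closed, or empty. -/
def CCOE (H : QMObj.{u} L) (G : Set H.carrier) : Prop :=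
  (G.Countable ∧ H.cl G = G) ∨ G = ∅

/-- The axioms for a class of pairs `⟨H, cl_H⟩` to be a quasiminimal pregeometry class. -/
structure IsQMClass (C : Set (QMObj.{u} L)) : Prop where
  /-- Closure under isomorphisms, transporting the closure operator. -/
  iso_closed : ∀ H ∈ C, ∀ (N : Type u) [_iN : L.Structure N] (f : H.carrier ≃[L] N),
      (⟨N, fun X => f '' (H.cl (f ⁻¹' X))⟩ : QMObj L) ∈ C
  /-- Any two members satisfy the same quantifier-free sentences. -/
  qf_theory : ∀ H ∈ C, ∀ H' ∈ C, ∀ (φ : L.Sentence), BoundedFormula.IsQF φ →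
      (H.carrier ⊨ φ ↔ H'.carrier ⊨ φ)
  /-- Each `cl_H` is a pregeometry. -/
  pregeom : ∀ H ∈ C, IsPregeometry H.cl
  /-- The closure of a finite set is countable. -/
  cl_finite_countable : ∀ H ∈ C, ∀ X : Set H.carrier, X.Finite → (H.cl X).Countable
  /-- The closure of any set is (the underlying set of) a substructure which, with the
  restricted closure operator, is again a member of the class. -/
  cl_mem : ∀ H ∈ C, ∀ X : Set H.carrier, ∃ S : L.Substructure H.carrier,
      (S : Set H.carrier) = H.cl X ∧
      (⟨↥S, fun Y => Subtype.val ⁻¹' (H.cl (Subtype.val '' Y))⟩ : QMObj L) ∈ C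
  /-- Partial embeddings preserve and reflect the closure relation. -/
  cl_embedding : ∀ H ∈ C, ∀ H' ∈ C, ∀ (p : Set (H.carrier × H'.carrier)),
      IsPartialEmbedding (L := L) p → ∀ X ⊆ pdom p, ∀ (y : H.carrier) (y' : H'.carrier),
        (y, y') ∈ p → (y ∈ H.cl X ↔ y' ∈ H'.cl (pimage p X))
  /-- ℵ₀-homogeneity over countable closed models, part (i): an isomorphism between
  countable closed (or empty) sets extends by any pair of independent points. -/
  homogeneity₁ : ∀ H ∈ C, ∀ H' ∈ C, ∀ (g : Set (H.carrier × H'.carrier)),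
      CCOE H (pdom g) → CCOE H' (pimg g) → IsPartialEmbedding (L := L) g →
      ∀ (x : H.carrier) (x' : H'.carrier), x ∉ H.cl (pdom g) → x' ∉ H'.cl (pimg g) →
        IsPartialEmbedding (L := L) (g ∪ {(x, x')})
  /-- ℵ₀-homogeneity over countable closed models, part (ii). -/
  homogeneity₂ : ∀ H ∈ C, ∀ H' ∈ C, ∀ (g f : Set (H.carrier × H'.carrier)),
      CCOE H (pdom g) → CCOE H' (pimg g) → IsPartialEmbedding (L := L) g →
      (pdom f).Finite → IsPartialEmbedding (L := L) (g ∪ f) →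
      ∀ y ∈ H.cl (pdom f ∪ pdom g), ∃ y' : H'.carrier,
        IsPartialEmbedding (L := L) (g ∪ f ∪ {(y, y')})


/-- `p` is a σ-type over `A` in `m` variables: every countable subset of `p` is
consistent with the structure, i.e. simultaneously satisfiable. -/
def IsSigmaType {M : Type u'} [L.Structure M] {A : Set M} {m : ℕ}
    (p : Set (InfFormula L (↥A ⊕ Fin m) 0)) : Prop :=
  ∀ Φ ⊆ p, Φ.Countable → ∃ v : Fin m → M, ∀ φ ∈ Φ, φ.RealizeP v

/-- A σ-type `p` is isolated if there is a consistent `L_{ω₁,ω}`-formula `ψ(x̄)`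
(possibly with parameters from `M`) such that `ψ` implies every formula of `p`. -/
def IsIsolated {M : Type u'} [L.Structure M] {A : Set M} {m : ℕ}
    (p : Set (InfFormula L (↥A ⊕ Fin m) 0)) : Prop :=
  ∃ ψ : InfFormula L (M ⊕ Fin m) 0,
    (∃ v : Fin m → M, ψ.Realize (Sum.elim id v) (fun i => i.elim0)) ∧
    ∀ φ ∈ p, ∀ v : Fin m → M, ψ.Realize (Sum.elim id v) (fun i => i.elim0) → φ.RealizeP v

/-- A σ-type `p` is realised if some tuple satisfies every formula of `p`. -/
def IsRealized {M : Type u'} [L.Structure M] {A : Set M} {m : ℕ}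
    (p : Set (InfFormula L (↥A ⊕ Fin m) 0)) : Prop :=
  ∃ v : Fin m → M, ∀ φ ∈ p, φ.RealizeP v

/-- `B` is an independent subset of the pregeometry `⟨H, cl_H⟩`. -/
def IsIndep (H : QMObj.{u} L) (B : Set H.carrier) : Prop :=
  ∀ x ∈ B, x ∉ H.cl (B \ {x})

/-- `B` is a basis of the pregeometry `⟨H, cl_H⟩`: a maximal independent subset. -/
def IsBasis (H : QMObj.{u} L) (B : Set H.carrier) : Prop :=
  IsIndep H B ∧ ∀ B' : Set H.carrier, B ⊆ B' → IsIndep H B' → B' = B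

/-- The model-theoretic algebraic closure of `X` in `M`: the set of elements
satisfying some first-order formula with parameters in `X` having finitely many
solutions. -/
def aclS (L : FirstOrder.Language.{v, w}) (M : Type u) [L.Structure M] (X : Set M) :
    Set M :=
  {y | ∃ (n : ℕ) (φ : L.BoundedFormula (Fin n) 1) (v : Fin n → M),
    (∀ i, v i ∈ X) ∧ φ.Realize v ![y] ∧ {z : M | φ.Realize v ![z]}.Finite}

/-!
Between two infinite-dimensional members of the class the finite partial embeddings form a
back-and-forth system, so by Karp's theorem they preserve all `L_{ω₁,ω}`-formulas; the empty map is
one of them. To extend a finite partial embedding `p` by a point `x`, use `ℵ₀`-homogeneity over `∅`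
if `x ∈ cl (dom p)`. Otherwise, going back and forth by that case, extend `p` to an isomorphism of
the countable closed sets `cl (dom p)` and `cl (im p)`; any point outside `cl (im p)` is then a
possible image of `x`, by `ℵ₀`-homogeneity over this isomorphism.
-/

section PartialMap

variable {M N : Type*}

theorem pdom_swap_preimage (p : Set (M × N)) : pdom (Prod.swap ⁻¹' p) = pimg p := by
  ext x
  simp [pdom, pimg]

theorem swap_preimage_insert (x : M) (y : N) (p : Set (M × N)) :
    Prod.swap ⁻¹' insert (x, y) p = insert (y, x) (Prod.swap ⁻¹' p) := by
  ext ⟨b, a⟩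
  simp [and_comm]

/-- The back-and-forth property of a family `I` of partial maps, given as graphs, over `A` and `B`:
members of `I` can be extended inside `I` to have any prescribed point of `A` in their domain, and
any prescribed point of `B` in their image. For `A = B = univ` this is the notion of Karp's
theorem, for countable `A` and `B` that of Cantor's theorem. -/
structure HasBackAndForth (I : Set (Set (M × N))) (A : Set M) (B : Set N) : Prop where
  forth : ∀ p ∈ I, ∀ x ∈ A, ∃ y, insert (x, y) p ∈ I
  back : ∀ p ∈ I, ∀ y ∈ B, ∃ x, insert (x, y) p ∈ I

theorem HasBackAndForth.exists_limit {I : Set (Set (M × N))} {A : Set M} {B : Set N}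
    (hI : HasBackAndForth I A B) (hA : A.Countable) (hB : B.Countable) {p : Set (M × N)}
    (hp : p ∈ I) :
    ∃ g, p ⊆ g ∧ A ⊆ pdom g ∧ B ⊆ pimg g ∧ ∀ s ⊆ g, s.Finite → ∃ q ∈ I, s ⊆ q := by
  have := hA.to_subtype
  have := hB.to_subtype
  have := Encodable.ofCountable (A ⊕ B)
  have extend (q : I) {z : M × N} (hz : insert z q.1 ∈ I) : q ≤ ⟨insert z q.1, hz⟩ :=
    subset_insert z q.1
  have cofinal : ∀ s : A ⊕ B, IsCofinal
      {q : I | Sum.elim (fun x : A => x.1 ∈ pdom q.1) (fun y : B => y.1 ∈ pimg q.1) s}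
    | .inl x, q => by
      obtain ⟨y, hy⟩ := hI.forth q q.2 x x.2
      exact ⟨_, ⟨(x.1, y), mem_insert _ _, rfl⟩, extend q hy⟩
    | .inr y, q => by
      obtain ⟨x, hx⟩ := hI.back q q.2 y y.2
      exact ⟨_, ⟨(x, y.1), mem_insert _ _, rfl⟩, extend q hx⟩
  let D (s : A ⊕ B) : Order.Cofinal I := ⟨_, cofinal s⟩
  let J := Order.idealOfCofinals ⟨p, hp⟩ D
  have hpJ : ⟨p, hp⟩ ∈ J := Order.mem_idealOfCofinals _ D
  refine ⟨⋃ q ∈ J, q.1, subset_biUnion_of_mem (u := Subtype.val) hpJ, fun x hx => ?_,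
    fun y hy => ?_, fun s hs hfin => ?_⟩
  · obtain ⟨q, ⟨z, hz, rfl⟩, hqJ⟩ := Order.cofinal_meets_idealOfCofinals ⟨p, hp⟩ D (.inl ⟨x, hx⟩)
    exact ⟨z, mem_biUnion hqJ hz, rfl⟩
  · obtain ⟨q, ⟨z, hz, rfl⟩, hqJ⟩ := Order.cofinal_meets_idealOfCofinals ⟨p, hp⟩ D (.inr ⟨y, hy⟩)
    exact ⟨z, mem_biUnion hqJ hz, rfl⟩
  · lift s to Finset (M × N) using hfin
    obtain ⟨q, -, hq⟩ :=
      DirectedOn.exists_mem_subset_of_finset_subset_biUnion ⟨_, hpJ⟩ J.directed hs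
    exact ⟨q, q.2, hq⟩

end PartialMap

section PartialEmbedding

theorem isQF_restrictFreeVar {α β : Type*} [DecidableEq α] {n : ℕ} {φ : L.BoundedFormula α n}
    (hφ : φ.IsQF) (f : φ.freeVarFinset → β) : (φ.restrictFreeVar f).IsQF := by
  induction hφ with
  | falsum => exact .falsum
  | of_isAtomic h =>
    cases h with
    | equal => exact (BoundedFormula.IsAtomic.equal _ _).isQF
    | rel => exact (BoundedFormula.IsAtomic.rel _ _).isQF
  | imp _ _ ih₁ ih₂ => exact (ih₁ _).imp (ih₂ _)

variable {M N : Type u} [L.Structure M] [L.Structure N] {p q : Set (M × N)}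

namespace IsPartialEmbedding

theorem mono (hq : IsPartialEmbedding (L := L) q) (hpq : p ⊆ q) :
    IsPartialEmbedding (L := L) p :=
  fun n φ hφ a b hab => hq n φ hφ a b fun i => hpq (hab i)

theorem swap (hp : IsPartialEmbedding (L := L) p) :
    IsPartialEmbedding (L := L) (Prod.swap ⁻¹' p) :=
  fun n φ hφ a b hab => (hp n φ hφ b a hab).symm

theorem of_forall_finite_subset
    (h : ∀ s ⊆ p, s.Finite → IsPartialEmbedding (L := L) s) : IsPartialEmbedding (L := L) p :=
  fun n φ hφ a b hab =>
    h (range fun i => (a i, b i)) (range_subset_iff.2 hab) (finite_range _) n φ hφ a b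
      mem_range_self

theorem realize_iff (hp : IsPartialEmbedding (L := L) p) {α : Type*} {φ : L.Formula α}
    (hφ : φ.IsQF) {a : α → M} {b : α → N} (hab : ∀ i, (a i, b i) ∈ p) :
    φ.Realize a ↔ φ.Realize b := by
  classical
  let e := φ.freeVarFinset.equivFin
  have realize_iff_restrict {K : Type u} [L.Structure K] (c : α → K) :
      (φ.restrictFreeVar e).Realize (fun i => c (e.symm i)) default ↔ φ.Realize c :=
    BoundedFormula.realize_restrictFreeVar c (by simp)
  rw [← realize_iff_restrict, ← realize_iff_restrict]
  exact hp _ _ (isQF_restrictFreeVar hφ e) _ _ fun i => hab (e.symm i)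

theorem right_unique (hp : IsPartialEmbedding (L := L) p) {x : M} {y z : N}
    (hy : (x, y) ∈ p) (hz : (x, z) ∈ p) : y = z := by
  have h : x = x ↔ y = z := by
    simpa [Formula.realize_equal] using
      hp.realize_iff (φ := Term.equal (var (0 : Fin 2)) (var 1))
        (BoundedFormula.IsAtomic.equal _ _).isQF (a := ![x, x]) (b := ![y, z])
        (by simp [Fin.forall_fin_two, hy, hz])
  exact h.1 rfl

theorem pimage_pdom (hq : IsPartialEmbedding (L := L) q) (hpq : p ⊆ q) :
    pimage q (pdom p) = pimg p := by
  ext y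
  constructor
  · rintro ⟨_, ⟨z, hz, rfl⟩, hy⟩
    exact ⟨z, hz, hq.right_unique (hpq hz) hy⟩
  · rintro ⟨z, hz, rfl⟩
    exact ⟨z.1, ⟨z, hz, rfl⟩, hpq hz⟩

end IsPartialEmbedding

theorem HasBackAndForth.realize_iff {I : Set (Set (M × N))} (hI : HasBackAndForth I univ univ)
    (hemb : ∀ p ∈ I, IsPartialEmbedding (L := L) p) {α : Type*} {n : ℕ} (φ : InfFormula L α n)
    (hp : p ∈ I) {v : α → M} {v' : α → N} (hv : ∀ a, (v a, v' a) ∈ p)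
    {xs : Fin n → M} {xs' : Fin n → N} (hxs : ∀ i, (xs i, xs' i) ∈ p) :
    φ.Realize v xs ↔ φ.Realize v' xs' := by
  induction φ generalizing p with
  | falsum => rfl
  | equal t₁ t₂ =>
    have h := (hemb p hp).realize_iff (φ := t₁.equal t₂) (BoundedFormula.IsAtomic.equal _ _).isQF
      (a := Sum.elim v xs) (b := Sum.elim v' xs') (Sum.rec hv hxs)
    rwa [Formula.realize_equal, Formula.realize_equal] at h
  | rel R ts =>
    have h := (hemb p hp).realize_iff (φ := R.formula ts) (BoundedFormula.IsAtomic.rel _ _).isQF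
      (a := Sum.elim v xs) (b := Sum.elim v' xs') (Sum.rec hv hxs)
    rwa [Formula.realize_rel, Formula.realize_rel] at h
  | not φ ih => exact not_congr (ih hp hv hxs)
  | iInf φ ih => exact forall_congr' fun i => ih i hp hv hxs
  | all φ ih =>
    have realize_snoc_iff {x : M} {x' : N} (h : insert (x, x') p ∈ I) :
        φ.Realize v (Fin.snoc xs x) ↔ φ.Realize v' (Fin.snoc xs' x') := by
      refine ih h (fun a => .inr (hv a)) fun i => ?_
      cases i using Fin.lastCases with
      | last => simp
      | cast i => simpa using .inr (hxs i)
    constructor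
    · intro hφ x'
      obtain ⟨x, hx⟩ := hI.back p hp x' trivial
      exact (realize_snoc_iff hx).1 (hφ x)
    · intro hφ x
      obtain ⟨x', hx'⟩ := hI.forth p hp x trivial
      exact (realize_snoc_iff hx').2 (hφ x')

/-- The finite partial embeddings extending the partial map `f`. -/
def finiteExtensions (L : FirstOrder.Language.{v, w}) {M N : Type u} [L.Structure M]
    [L.Structure N] (f : Set (M × N)) : Set (Set (M × N)) :=
  {p | f ⊆ p ∧ p.Finite ∧ IsPartialEmbedding (L := L) p}

theorem swap_preimage_mem_finiteExtensions {f : Set (M × N)} (hp : p ∈ finiteExtensions L f) :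
    Prod.swap ⁻¹' p ∈ finiteExtensions L (Prod.swap ⁻¹' f) :=
  ⟨preimage_mono hp.1, hp.2.1.preimage Prod.swap_injective.injOn, hp.2.2.swap⟩

theorem insert_mem_finiteExtensions {f : Set (M × N)} (hp : p ∈ finiteExtensions L f)
    {z : M × N} (hz : IsPartialEmbedding (L := L) (insert z p)) :
    insert z p ∈ finiteExtensions L f :=
  ⟨hp.1.trans (subset_insert z p), hp.2.1.insert z, hz⟩

theorem hasBackAndForth_finiteExtensions {f : Set (M × N)} {A : Set M} {B : Set N}
    (forth : ∀ p ∈ finiteExtensions L f, ∀ x ∈ A, ∃ y,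
      IsPartialEmbedding (L := L) (insert (x, y) p))
    (back : ∀ p ∈ finiteExtensions L (Prod.swap ⁻¹' f), ∀ y ∈ B, ∃ x,
      IsPartialEmbedding (L := L) (insert (y, x) p)) :
    HasBackAndForth (finiteExtensions L f) A B where
  forth p hp x hx := (forth p hp x hx).imp fun _ => insert_mem_finiteExtensions hp
  back p hp y hy := by
    obtain ⟨x, hx⟩ := back _ (swap_preimage_mem_finiteExtensions hp) y hy
    rw [← swap_preimage_insert] at hx
    exact ⟨x, insert_mem_finiteExtensions hp hx.swap⟩

end PartialEmbedding

/-- `H` is infinite-dimensional: no finite subset spans it. -/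
def QMObj.InfiniteDimensional (H : QMObj.{u} L) : Prop :=
  ∀ X : Set H.carrier, X.Finite → H.cl X ≠ Set.univ

namespace IsQMClass

variable {C : Set (QMObj.{u} L)} {H H' : QMObj.{u} L} {f p : Set (H.carrier × H'.carrier)}

theorem infiniteDimensional (hC : IsQMClass C) (hH : H ∈ C) [Uncountable H.carrier] :
    H.InfiniteDimensional :=
  fun X hX hspan =>
    not_countable_univ (α := H.carrier) (hspan ▸ hC.cl_finite_countable H hH X hX)

theorem isPartialEmbedding_empty (hC : IsQMClass C) (hH : H ∈ C) (hH' : H' ∈ C) :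
    IsPartialEmbedding (L := L) (∅ : Set (H.carrier × H'.carrier)) := by
  intro n φ hφ a b hab
  have : IsEmpty (Fin n) := ⟨hab⟩
  have h := hC.qf_theory H hH H' hH' (φ.relabel isEmptyElim) (hφ.relabel _)
  simp only [Sentence.Realize, Formula.realize_relabel] at h
  rwa [Subsingleton.elim a, Subsingleton.elim b]

theorem mem_cl_pdom_iff (hC : IsQMClass C) (hH : H ∈ C) (hH' : H' ∈ C)
    (hp : IsPartialEmbedding (L := L) p) (hfp : f ⊆ p) {x : H.carrier} {y : H'.carrier}
    (hxy : (x, y) ∈ p) : x ∈ H.cl (pdom f) ↔ y ∈ H'.cl (pimg f) := by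
  rw [hC.cl_embedding H hH H' hH' p hp (pdom f) (image_mono hfp) x y hxy, hp.pimage_pdom hfp]

theorem exists_insert_of_mem_cl (hC : IsQMClass C) (hH : H ∈ C) (hH' : H' ∈ C) (hfin : p.Finite)
    (hp : IsPartialEmbedding (L := L) p) {x : H.carrier} (hx : x ∈ H.cl (pdom p)) :
    ∃ y, IsPartialEmbedding (L := L) (insert (x, y) p) := by
  have h := hC.homogeneity₂ H hH H' hH' ∅ p (.inr (image_empty _)) (.inr (image_empty _))
    (hC.isPartialEmbedding_empty hH hH') (hfin.image _)
  simp only [empty_union, union_singleton] at h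
  exact h hp x ((hC.pregeom H hH).mono subset_union_left hx)

theorem hasBackAndForth_cl (hC : IsQMClass C) (hH : H ∈ C) (hH' : H' ∈ C)
    (f : Set (H.carrier × H'.carrier)) :
    HasBackAndForth (finiteExtensions L f) (H.cl (pdom f)) (H'.cl (pimg f)) := by
  refine hasBackAndForth_finiteExtensions (fun p ⟨hfp, hfin, hp⟩ x hx => ?_)
    fun p ⟨hfp, hfin, hp⟩ y hy => ?_
  · exact hC.exists_insert_of_mem_cl hH hH' hfin hp
      ((hC.pregeom H hH).mono (image_mono hfp) hx)
  · rw [← pdom_swap_preimage] at hy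
    exact hC.exists_insert_of_mem_cl hH' hH hfin hp
      ((hC.pregeom H' hH').mono (image_mono hfp) hy)

theorem exists_extension_cl (hC : IsQMClass C) (hH : H ∈ C) (hH' : H' ∈ C) (hfin : f.Finite)
    (hf : IsPartialEmbedding (L := L) f) :
    ∃ g, f ⊆ g ∧ IsPartialEmbedding (L := L) g ∧ pdom g = H.cl (pdom f) ∧
      pimg g = H'.cl (pimg f) := by
  obtain ⟨g, hfg, hdom, himg, happrox⟩ := (hC.hasBackAndForth_cl hH hH' f).exists_limit
    (hC.cl_finite_countable H hH _ (hfin.image _))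
    (hC.cl_finite_countable H' hH' _ (hfin.image _)) ⟨Subset.rfl, hfin, hf⟩
  have hg : IsPartialEmbedding (L := L) g := .of_forall_finite_subset fun s hs hsfin =>
    let ⟨_, hq, hsq⟩ := happrox s hs hsfin
    hq.2.2.mono hsq
  have mem_iff {z} (hz : z ∈ g) : z.1 ∈ H.cl (pdom f) ↔ z.2 ∈ H'.cl (pimg f) :=
    hC.mem_cl_pdom_iff hH hH' hg hfg hz
  refine ⟨{z ∈ g | z.1 ∈ H.cl (pdom f)}, ?_, hg.mono (sep_subset _ _), ?_, ?_⟩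
  · exact fun z hz => ⟨hfg hz, (hC.pregeom H hH).subset_cl _ ⟨z, hz, rfl⟩⟩
  · refine Subset.antisymm (image_subset_iff.2 fun z hz => hz.2) fun x hx => ?_
    obtain ⟨z, hz, rfl⟩ := hdom hx
    exact ⟨z, ⟨hz, hx⟩, rfl⟩
  · refine Subset.antisymm (image_subset_iff.2 fun z hz => (mem_iff hz.1).1 hz.2) fun y hy => ?_
    obtain ⟨z, hz, rfl⟩ := himg hy
    exact ⟨z, ⟨hz, (mem_iff hz).2 hy⟩, rfl⟩

theorem isPartialEmbedding_insert_of_notMem_cl (hC : IsQMClass C) (hH : H ∈ C) (hH' : H' ∈ C)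
    (hfin : p.Finite) (hp : IsPartialEmbedding (L := L) p) {x : H.carrier} {y : H'.carrier}
    (hx : x ∉ H.cl (pdom p)) (hy : y ∉ H'.cl (pimg p)) :
    IsPartialEmbedding (L := L) (insert (x, y) p) := by
  obtain ⟨g, hpg, hg, hdom, himg⟩ := hC.exists_extension_cl hH hH' hfin hp
  have hcl : H.cl (pdom g) = pdom g := by rw [hdom, (hC.pregeom H hH).idem]
  have hcl' : H'.cl (pimg g) = pimg g := by rw [himg, (hC.pregeom H' hH').idem]
  have hcount : (pdom g).Countable := hdom ▸ hC.cl_finite_countable H hH _ (hfin.image _)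
  have hcount' : (pimg g).Countable := himg ▸ hC.cl_finite_countable H' hH' _ (hfin.image _)
  have hgxy := hC.homogeneity₁ H hH H' hH' g (.inl ⟨hcount, hcl⟩) (.inl ⟨hcount', hcl'⟩) hg x y
    (by rwa [hcl, hdom]) (by rwa [hcl', himg])
  rw [union_singleton] at hgxy
  exact hgxy.mono (insert_subset_insert hpg)

theorem exists_insert (hC : IsQMClass C) (hH : H ∈ C) (hH' : H' ∈ C)
    (hdim' : H'.InfiniteDimensional) (hfin : p.Finite) (hp : IsPartialEmbedding (L := L) p)
    (x : H.carrier) : ∃ y, IsPartialEmbedding (L := L) (insert (x, y) p) := by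
  by_cases hx : x ∈ H.cl (pdom p)
  · exact hC.exists_insert_of_mem_cl hH hH' hfin hp hx
  · obtain ⟨y, hy⟩ := (ne_univ_iff_exists_notMem _).1 (hdim' (pimg p) (hfin.image _))
    exact ⟨y, hC.isPartialEmbedding_insert_of_notMem_cl hH hH' hfin hp hx hy⟩

theorem hasBackAndForth_univ (hC : IsQMClass C) (hH : H ∈ C) (hH' : H' ∈ C)
    (hdim : H.InfiniteDimensional) (hdim' : H'.InfiniteDimensional)
    (f : Set (H.carrier × H'.carrier)) : HasBackAndForth (finiteExtensions L f) univ univ :=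
  hasBackAndForth_finiteExtensions
    (fun _ ⟨_, hfin, hp⟩ x _ => hC.exists_insert hH hH' hdim' hfin hp x)
    (fun _ ⟨_, hfin, hp⟩ y _ => hC.exists_insert hH' hH hdim hfin hp y)

theorem realize_iff_of_finite (hC : IsQMClass C) (hH : H ∈ C) (hH' : H' ∈ C)
    (hdim : H.InfiniteDimensional) (hdim' : H'.InfiniteDimensional) (hfin : p.Finite)
    (hp : IsPartialEmbedding (L := L) p) {α : Type*} {n : ℕ} (φ : InfFormula L α n)
    {v : α → H.carrier} {v' : α → H'.carrier} (hv : ∀ a, (v a, v' a) ∈ p)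
    {xs : Fin n → H.carrier} {xs' : Fin n → H'.carrier} (hxs : ∀ i, (xs i, xs' i) ∈ p) :
    φ.Realize v xs ↔ φ.Realize v' xs' :=
  (hC.hasBackAndForth_univ hH hH' hdim hdim' p).realize_iff (fun _ hq => hq.2.2) φ
    ⟨Subset.rfl, hfin, hp⟩ hv hxs

theorem isSigmaEmbedding_of_finite (hC : IsQMClass C) (hH : H ∈ C) (hH' : H' ∈ C)
    (hdim : H.InfiniteDimensional) (hdim' : H'.InfiniteDimensional) (hfin : p.Finite)
    (hp : IsPartialEmbedding (L := L) p) : IsSigmaEmbedding (L := L) p :=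
  ⟨hp, fun φ _ hb => hC.realize_iff_of_finite hH hH' hdim hdim' hfin hp φ hb nofun⟩

end IsQMClass

theorem statement_8_general {L : FirstOrder.Language.{v, w}} (C : Set (QMObj.{u} L))
    (hC : IsQMClass C) (H : QMObj.{u} L) (hH : H ∈ C) (H' : QMObj.{u} L) (hH' : H' ∈ C)
    (hdim : H.InfiniteDimensional) (hdim' : H'.InfiniteDimensional) :
    (∀ φ : InfSentence L, InfSentence.RealizeS H.carrier φ ↔
        InfSentence.RealizeS H'.carrier φ) ∧
      IsSigmaEmbedding (L := L) (∅ : Set (H.carrier × H'.carrier)) :=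
  have hempty := hC.isPartialEmbedding_empty hH hH'
  ⟨fun φ => hC.realize_iff_of_finite hH hH' hdim hdim' finite_empty hempty φ nofun nofun,
    hC.isSigmaEmbedding_of_finite hH hH' hdim hdim' finite_empty hempty⟩

/-- If `H, H' ∈ C` have the same uncountable cardinality then
`H ≡_{ω₁,ω} H'`; equivalently the empty map is a partial σ-embedding. -/
theorem statement_8 {L : FirstOrder.Language.{v, w}} (C : Set (QMObj.{u} L))
    (hC : IsQMClass C) (H : QMObj.{u} L) (hH : H ∈ C) (H' : QMObj.{u} L) (hH' : H' ∈ C)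
    (hcard : Cardinal.mk H.carrier = Cardinal.mk H'.carrier)
    (hunc : Uncountable H.carrier) :
    (∀ φ : InfSentence L, InfSentence.RealizeS H.carrier φ ↔
        InfSentence.RealizeS H'.carrier φ) ∧
      IsSigmaEmbedding (L := L) (∅ : Set (H.carrier × H'.carrier)) := by
  have : Uncountable H'.carrier := by
    rwa [← Cardinal.aleph0_lt_mk_iff, ← hcard, Cardinal.aleph0_lt_mk_iff]
  exact statement_8_general C hC H hH H' hH' (hC.infiniteDimensional hH)
    (hC.infiniteDimensional hH')

end QM
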